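/- arXiv:1307.3968 — 5 statements merged into one kernel-verified Lean document; each statement's English description precedes it below -/
import Mathlib

section
/- Let μ, ν : I → ℝ be differentiable functions on an open interval I satisfying the ODE system ν'(t) = −1 − ν(t)² − 3 μ(t)² and μ'(t) = 2 μ(t) ν(t) for all t ∈ I. Then the function t ↦ μ(t) ν(t)² + μ(t)³ + μ(t) is constant on I. -/
/-- First integral of the structure equations for improved δ(2,2)-ideal
Lagrangian submanifolds of CP⁵(4): if ν' = −1 − ν² − 3μ² and μ' = 2μν on an
open interval, then μν² + μ³ + μ is constant. -/
theorem stmt_2 (a b : ℝ) (μ ν : ℝ → ℝ)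
    (hν : ∀ t ∈ Set.Ioo a b, HasDerivAt ν (-1 - ν t ^ 2 - 3 * μ t ^ 2) t)
    (hμ : ∀ t ∈ Set.Ioo a b, HasDerivAt μ (2 * μ t * ν t) t) :
    ∀ s ∈ Set.Ioo a b, ∀ t ∈ Set.Ioo a b,
      μ s * ν s ^ 2 + μ s ^ 3 + μ s = μ t * ν t ^ 2 + μ t ^ 3 + μ t := by
  intro s hs t ht
  have hd : ∀ x ∈ Set.Ioo a b,
      HasDerivAt (fun x => μ x * ν x ^ 2 + μ x ^ 3 + μ x) 0 x := by
    intro x hx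
    have h := (((hμ x hx).fun_mul ((hν x hx).fun_pow 2)).fun_add
      ((hμ x hx).fun_pow 3)).fun_add (hμ x hx)
    -- Substituting the system, the product rule expression cancels identically.
    refine h.congr_deriv ?_
    push_cast
    ring
  exact isOpen_Ioo.is_const_of_deriv_eq_zero isPreconnected_Ioo
    (fun x hx => (hd x hx).differentiableAt.differentiableWithinAt)
    (fun x hx => (hd x hx).deriv) hs ht
end

section
/- Let μ, ν : I → ℝ be differentiable functions on an open interval I satisfying the ODE system ν'(t) = 1 − 3 μ(t)² − ν(t)² and μ'(t) = 2 μ(t) ν(t) for all t ∈ I. Then the function t ↦ μ(t) ν(t)² + μ(t)³ − μ(t) is constant on I. -/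
/-- First integral of the structure equations for improved δ(2,2)-ideal
Lagrangian submanifolds of CH⁵(−4): if ν' = 1 − 3μ² − ν² and μ' = 2μν on an
open interval, then μν² + μ³ − μ is constant. -/
theorem stmt_4 (a b : ℝ) (μ ν : ℝ → ℝ)
    (hν : ∀ t ∈ Set.Ioo a b, HasDerivAt ν (1 - 3 * μ t ^ 2 - ν t ^ 2) t)
    (hμ : ∀ t ∈ Set.Ioo a b, HasDerivAt μ (2 * μ t * ν t) t) :
    ∀ s ∈ Set.Ioo a b, ∀ t ∈ Set.Ioo a b,
      μ s * ν s ^ 2 + μ s ^ 3 - μ s = μ t * ν t ^ 2 + μ t ^ 3 - μ t := by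
  have key : ∀ t ∈ Set.Ioo a b,
      HasDerivAt (fun t => μ t * ν t ^ 2 + μ t ^ 3 - μ t) 0 t := by
    intro t ht
    have h := (((hμ t ht).fun_mul ((hν t ht).fun_pow 2)).fun_add
      ((hμ t ht).fun_pow 3)).fun_sub (hμ t ht)
    refine h.congr_deriv ?_
    push_cast
    ring
  intro s hs t ht
  exact isOpen_Ioo.is_const_of_deriv_eq_zero isPreconnected_Ioo
    (fun x hx => (key x hx).differentiableAt.differentiableWithinAt)
    (fun x hx => (key x hx).deriv) hs ht
end

section
/- Let f : ℝ → ℂ be a twice differentiable function. Then f satisfies the ODE f''(t) − 4i·sech(2t)·f'(t) − f(t) = 0 for all t ∈ ℝ if and only if there exist constants c₁, c₂ ∈ ℂ such that f(t) = (c₁ + c₂(2t + i·cosh 2t))/(cosh t − i·sinh t) for all t ∈ ℝ. -/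
/-!
Put `w = cosh t - i sinh t` and `v = cosh t + i sinh t`. Then `w' = -i v`, `v' = i w`,
`w v = cosh 2t` and `w² + v² = 2`; in particular `w` and `v` never vanish. These relations give
`((f w)' / v²)' = (w / v²) (f'' - 4 i sech(2t) f' - f)` (`hasDerivAt_firstIntegral`), so the ODE
holds exactly when `(f w)' / v²` is a constant `k`. As `2 v² = (2t + i cosh 2t)'`, this means that
`f w - (k / 2) (2t + i cosh 2t)` is constant, which is the claimed formula.
-/

namespace SechODE

open Complex

/-- The denominator `cosh t - i sinh t` of the general solution. -/
noncomputable def w (t : ℝ) : ℂ := (Real.cosh t : ℂ) - I * (Real.sinh t : ℂ)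

/-- The complex conjugate `cosh t + i sinh t` of `w t`. -/
noncomputable def v (t : ℝ) : ℂ := (Real.cosh t : ℂ) + I * (Real.sinh t : ℂ)

/-- The function `2t + i cosh 2t`, a primitive of `2 v²`. -/
noncomputable def p (t : ℝ) : ℂ := 2 * (t : ℂ) + I * (Real.cosh (2 * t) : ℂ)

lemma cosh_sq_cast (t : ℝ) : (Real.cosh t : ℂ) ^ 2 = (Real.sinh t : ℂ) ^ 2 + 1 := by
  exact_mod_cast Real.cosh_sq t

lemma w_mul_v (t : ℝ) : w t * v t = (Real.cosh (2 * t) : ℂ) := by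
  rw [Real.cosh_two_mul, w, v]
  push_cast
  linear_combination (-(Complex.sinh t) ^ 2) * I_sq

lemma w_sq_add_v_sq (t : ℝ) : w t ^ 2 + v t ^ 2 = 2 := by
  rw [w, v]
  linear_combination 2 * cosh_sq_cast t + 2 * (Real.sinh t : ℂ) ^ 2 * I_sq

lemma cosh_ne_zero (t : ℝ) : (Real.cosh t : ℂ) ≠ 0 := by
  exact_mod_cast (Real.cosh_pos t).ne'

lemma w_ne_zero (t : ℝ) : w t ≠ 0 :=
  left_ne_zero_of_mul (w_mul_v t ▸ cosh_ne_zero (2 * t))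

lemma v_ne_zero (t : ℝ) : v t ≠ 0 :=
  right_ne_zero_of_mul (w_mul_v t ▸ cosh_ne_zero (2 * t))

lemma hasDerivAt_w (t : ℝ) : HasDerivAt w (-I * v t) t := by
  have h := (Real.hasDerivAt_cosh t).ofReal_comp.sub
    ((Real.hasDerivAt_sinh t).ofReal_comp.const_mul I)
  refine h.congr_deriv ?_
  rw [v]
  linear_combination (Real.sinh t : ℂ) * I_sq

lemma hasDerivAt_v (t : ℝ) : HasDerivAt v (I * w t) t := by
  have h := (Real.hasDerivAt_cosh t).ofReal_comp.add
    ((Real.hasDerivAt_sinh t).ofReal_comp.const_mul I)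
  refine h.congr_deriv ?_
  rw [w]
  linear_combination (Real.sinh t : ℂ) * I_sq

lemma hasDerivAt_p (t : ℝ) : HasDerivAt p (2 * v t ^ 2) t := by
  have h := ((hasDerivAt_id t).ofReal_comp.const_mul (2 : ℂ)).add
    (((hasDerivAt_w t).mul (hasDerivAt_v t)).const_mul I)
  have hp : p = fun s : ℝ => 2 * (s : ℂ) + I * (w s * v s) := by
    funext s
    rw [w_mul_v, p]
  rw [hp]
  refine h.congr_deriv ?_
  push_cast
  linear_combination (w t ^ 2 - v t ^ 2) * I_sq - w_sq_add_v_sq t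

lemma hasDerivAt_mul_w {f : ℝ → ℂ} (hf : Differentiable ℝ f) (t : ℝ) :
    HasDerivAt (fun s => f s * w s) (deriv f t * w t - I * f t * v t) t :=
  ((hf t).hasDerivAt.mul (hasDerivAt_w t)).congr_deriv (by ring)

/-- The left-hand side of the ODE is, up to the nonvanishing factor `w / v²`, the derivative of
`(f w)' / v²`. -/
lemma hasDerivAt_firstIntegral {f : ℝ → ℂ} (hf : Differentiable ℝ f)
    (hf' : Differentiable ℝ (deriv f)) (t : ℝ) :
    HasDerivAt (fun s => (deriv f s * w s - I * f s * v s) / v s ^ 2)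
      (w t / v t ^ 2 * (deriv (deriv f) t
        - 4 * I * (1 / (Real.cosh (2 * t) : ℂ)) * deriv f t - f t)) t := by
  have hv := v_ne_zero t
  have hw := w_ne_zero t
  have h := (((hf' t).hasDerivAt.mul (hasDerivAt_w t)).sub
    (((hf t).hasDerivAt.const_mul I).mul (hasDerivAt_v t))).div
    ((hasDerivAt_v t).pow 2) (pow_ne_zero 2 hv)
  refine h.congr_deriv ?_
  rw [← w_mul_v]
  simp only [Pi.mul_apply, Pi.sub_apply, Pi.pow_apply]
  field_simp
  push_cast
  linear_combination (-2 * I * v t * deriv f t) * w_sq_add_v_sq t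
    + (w t * v t ^ 2 * f t) * I_sq

end SechODE

open SechODE


/-- A twice differentiable f : ℝ → ℂ satisfies f'' − 4i·sech(2t)·f' − f = 0 iff
f(t) = (c₁ + c₂(2t + i cosh 2t))/(cosh t − i sinh t) for some constants c₁, c₂. -/
theorem stmt_11 (f : ℝ → ℂ)
    (hf : Differentiable ℝ f) (hf' : Differentiable ℝ (deriv f)) :
    (∀ t : ℝ, deriv (deriv f) t
        - 4 * Complex.I * (1 / (Real.cosh (2 * t) : ℂ)) * deriv f t - f t = 0)
      ↔ ∃ c₁ c₂ : ℂ, ∀ t : ℝ,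
          f t = (c₁ + c₂ * (2 * (t : ℂ) + Complex.I * (Real.cosh (2 * t) : ℂ)))
            / ((Real.cosh t : ℂ) - Complex.I * (Real.sinh t : ℂ)) := by
  constructor
  · intro h
    have hder := hasDerivAt_firstIntegral hf hf'
    simp only [h, mul_zero] at hder
    have hconst := fun t => is_const_of_deriv_eq_zero
      (fun s => (hder s).differentiableAt) (fun s => (hder s).deriv) t 0
    set k := (deriv f 0 * w 0 - Complex.I * f 0 * v 0) / v 0 ^ 2
    have hg : ∀ t, HasDerivAt (fun s => f s * w s - k / 2 * p s) 0 t := fun t => by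
      refine ((hasDerivAt_mul_w hf t).sub ((hasDerivAt_p t).const_mul (k / 2))).congr_deriv ?_
      have := (div_eq_iff (pow_ne_zero 2 (v_ne_zero t))).1 (hconst t)
      linear_combination this
    refine ⟨f 0 * w 0 - k / 2 * p 0, k / 2, fun t => ?_⟩
    have := is_const_of_deriv_eq_zero
      (fun s => (hg s).differentiableAt) (fun s => (hg s).deriv) t 0
    refine (eq_div_iff (w_ne_zero t)).2 ?_
    change f t * w t = _ + k / 2 * p t
    linear_combination this
  · rintro ⟨c₁, c₂, h⟩ t
    have hg : (fun s => f s * w s) = fun s => c₁ + c₂ * p s :=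
      funext fun s => (eq_div_iff (w_ne_zero s)).1 (h s)
    have hk : (fun s => (deriv f s * w s - Complex.I * f s * v s) / v s ^ 2)
        = fun _ => 2 * c₂ := by
      funext s
      have h1 := hasDerivAt_mul_w hf s
      rw [hg] at h1
      have h2 := h1.unique (((hasDerivAt_p s).const_mul c₂).const_add c₁)
      rw [div_eq_iff (pow_ne_zero 2 (v_ne_zero s)), h2]
      ring
    have hder := hasDerivAt_firstIntegral hf hf' t
    rw [hk] at hder
    have h0 := hder.unique (hasDerivAt_const t (2 * c₂))
    exact (mul_eq_zero.1 h0).resolve_left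
      (div_ne_zero (w_ne_zero t) (pow_ne_zero 2 (v_ne_zero t)))
end

section
/- Equip ℂ² with the real inner product ⟨v, w⟩ = Re(v₁·conj(w₁) + v₂·conj(w₂)). Let z : I → ℂ² be a twice differentiable curve on an open interval I with ⟨z(t), z(t)⟩ = 1, ⟨z'(t), z'(t)⟩ = 1 and ⟨z'(t), i·z(t)⟩ = 0 for all t ∈ I. Then z''(t) = i·λ(t)·z'(t) − z(t) for all t ∈ I, where λ(t) = ⟨z''(t), i·z'(t)⟩. -/
/-!
Write `H(v, w) = v₁ w̄₁ + v₂ w̄₂` for the Hermitian product, so that `Re H(v, w) = ⟨v, w⟩` and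
`Im H(v, w) = ⟨v, i w⟩`. Differentiating `⟨z, z⟩ = 1` and combining with the Legendre condition
gives `H(z', z) = 0`, hence `z, z'` is a unitary basis of `ℂ²` at every time. Differentiating the
real and imaginary parts of `H(z', z) = 0`, and `⟨z', z'⟩ = 1`, gives `H(z'', z) = -1` and
`H(z'', z') = i λ`, which are the coordinates of `z''` in that basis
(`eq_zero_of_orthogonal_to_unitary_basis`).
-/

/-- The real inner product ⟨v,w⟩ = Re(v₁ w̄₁ + v₂ w̄₂) on ℂ². -/
noncomputable def reInnerC2 (v w : ℂ × ℂ) : ℝ :=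
  (v.1 * starRingEnd ℂ w.1 + v.2 * starRingEnd ℂ w.2).re

theorem reInnerC2_hasDerivAt {f g : ℝ → ℂ × ℂ} {f' g' : ℂ × ℂ} {t : ℝ}
    (hf : HasDerivAt f f' t) (hg : HasDerivAt g g' t) :
    HasDerivAt (fun s => reInnerC2 (f s) (g s)) (reInnerC2 f' (g t) + reInnerC2 (f t) g') t := by
  have f1 : HasDerivAt (fun s => (f s).1) f'.1 t :=
    (ContinuousLinearMap.fst ℝ ℂ ℂ).hasFDerivAt.comp_hasDerivAt t hf
  have f2 : HasDerivAt (fun s => (f s).2) f'.2 t :=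
    (ContinuousLinearMap.snd ℝ ℂ ℂ).hasFDerivAt.comp_hasDerivAt t hf
  have g1 : HasDerivAt (fun s => starRingEnd ℂ (g s).1) (starRingEnd ℂ g'.1) t :=
    ((ContinuousLinearMap.fst ℝ ℂ ℂ).hasFDerivAt.comp_hasDerivAt t hg).star
  have g2 : HasDerivAt (fun s => starRingEnd ℂ (g s).2) (starRingEnd ℂ g'.2) t :=
    ((ContinuousLinearMap.snd ℝ ℂ ℂ).hasFDerivAt.comp_hasDerivAt t hg).star
  have h := Complex.reCLM.hasFDerivAt.comp_hasDerivAt t ((f1.mul g1).add (f2.mul g2))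
  refine h.congr_deriv ?_
  simp only [reInnerC2, Complex.reCLM_apply, Complex.add_re]
  ring

/-- Leibniz rule for a constant inner product along an open interval. -/
theorem reInnerC2_deriv_of_const {a b c : ℝ} {f g : ℝ → ℂ × ℂ} {f' g' : ℂ × ℂ} {t : ℝ}
    (ht : t ∈ Set.Ioo a b) (hf : HasDerivAt f f' t) (hg : HasDerivAt g g' t)
    (hc : ∀ s ∈ Set.Ioo a b, reInnerC2 (f s) (g s) = c) :
    reInnerC2 f' (g t) + reInnerC2 (f t) g' = 0 := by
  have hev : (fun s => reInnerC2 (f s) (g s)) =ᶠ[nhds t] fun _ => c :=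
    Filter.eventually_of_mem (Ioo_mem_nhds ht.1 ht.2) hc
  exact (reInnerC2_hasDerivAt hf hg).unique ((hasDerivAt_const t c).congr_of_eventuallyEq hev)

theorem reInnerC2_comm (v w : ℂ × ℂ) : reInnerC2 v w = reInnerC2 w v := by
  simp [reInnerC2]; ring

theorem hermitian_eq (v w : ℂ × ℂ) :
    v.1 * starRingEnd ℂ w.1 + v.2 * starRingEnd ℂ w.2 =
      (reInnerC2 v w : ℂ) + Complex.I * (reInnerC2 v (Complex.I • w) : ℂ) := by
  apply Complex.ext
  · simp [reInnerC2]
  · simp [reInnerC2]; ring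

theorem reInnerC2_I_smul_self (v : ℂ × ℂ) : reInnerC2 v (Complex.I • v) = 0 := by
  simp [reInnerC2]; ring

/-- A vector of `ℂ²` that is Hermitian-orthogonal to both members of a unitary basis `(v, u)`
vanishes. The determinant of the basis has modulus one by Lagrange's identity, so Cramer's rule
applies. -/
theorem eq_zero_of_orthogonal_to_unitary_basis {x y v₁ v₂ u₁ u₂ : ℂ}
    (hv : v₁ * starRingEnd ℂ v₁ + v₂ * starRingEnd ℂ v₂ = 1)
    (hu : u₁ * starRingEnd ℂ u₁ + u₂ * starRingEnd ℂ u₂ = 1)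
    (huv : u₁ * starRingEnd ℂ v₁ + u₂ * starRingEnd ℂ v₂ = 0)
    (hxv : x * starRingEnd ℂ v₁ + y * starRingEnd ℂ v₂ = 0)
    (hxu : x * starRingEnd ℂ u₁ + y * starRingEnd ℂ u₂ = 0) : x = 0 ∧ y = 0 := by
  have hdet : (v₁ * u₂ - v₂ * u₁) *
      (starRingEnd ℂ v₁ * starRingEnd ℂ u₂ - starRingEnd ℂ v₂ * starRingEnd ℂ u₁) = 1 := by
    linear_combination (u₁ * starRingEnd ℂ u₁ + u₂ * starRingEnd ℂ u₂) * hv + hu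
      - (v₁ * starRingEnd ℂ u₁ + v₂ * starRingEnd ℂ u₂) * huv
  constructor
  · linear_combination (-x) * hdet + (v₁ * u₂ - v₂ * u₁) *
      (starRingEnd ℂ u₂ * hxv - starRingEnd ℂ v₂ * hxu)
  · linear_combination (-y) * hdet + (v₁ * u₂ - v₂ * u₁) *
      (starRingEnd ℂ v₁ * hxu - starRingEnd ℂ u₁ * hxv)

/-- A unit speed Legendre curve z in S³(1) ⊂ ℂ² satisfies z'' = iλz' − z,
where λ = ⟨z'', iz'⟩ is its curvature. -/
theorem stmt_18 (a b : ℝ) (z z' z'' : ℝ → ℂ × ℂ)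
    (hz : ∀ t ∈ Set.Ioo a b, HasDerivAt z (z' t) t)
    (hz' : ∀ t ∈ Set.Ioo a b, HasDerivAt z' (z'' t) t)
    (hunit : ∀ t ∈ Set.Ioo a b, reInnerC2 (z t) (z t) = 1)
    (hspeed : ∀ t ∈ Set.Ioo a b, reInnerC2 (z' t) (z' t) = 1)
    (hLeg : ∀ t ∈ Set.Ioo a b, reInnerC2 (z' t) (Complex.I • z t) = 0) :
    ∀ t ∈ Set.Ioo a b,
      z'' t = ((Complex.I * (reInnerC2 (z'' t) (Complex.I • z' t) : ℂ)) • z' t)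
        - z t := by
  have hre : ∀ s ∈ Set.Ioo a b, reInnerC2 (z' s) (z s) = 0 := by
    intro s hs
    have h := reInnerC2_deriv_of_const hs (hz s hs) (hz s hs) hunit
    rw [reInnerC2_comm (z s)] at h
    linarith
  intro t ht
  have hzz : reInnerC2 (z'' t) (z t) = -1 := by
    have h := reInnerC2_deriv_of_const ht (hz' t ht) (hz t ht) hre
    linarith [hspeed t ht]
  have hzIz : reInnerC2 (z'' t) (Complex.I • z t) = 0 := by
    have h := reInnerC2_deriv_of_const ht (hz' t ht) ((hz t ht).const_smul Complex.I) hLeg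
    rw [reInnerC2_I_smul_self, add_zero] at h
    exact h
  have hzz' : reInnerC2 (z'' t) (z' t) = 0 := by
    have h := reInnerC2_deriv_of_const ht (hz' t ht) (hz' t ht) hspeed
    rw [reInnerC2_comm (z' t)] at h
    linarith
  have Hv := hermitian_eq (z t) (z t)
  have Hu := hermitian_eq (z' t) (z' t)
  have Huv := hermitian_eq (z' t) (z t)
  have Hwv := hermitian_eq (z'' t) (z t)
  have Hwu := hermitian_eq (z'' t) (z' t)
  rw [hunit t ht, reInnerC2_I_smul_self] at Hv
  rw [hspeed t ht, reInnerC2_I_smul_self] at Hu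
  rw [hre t ht, hLeg t ht] at Huv
  rw [hzz, hzIz] at Hwv
  rw [hzz'] at Hwu
  generalize reInnerC2 (z'' t) (Complex.I • z' t) = l at *
  push_cast at Hv Hu Huv Hwv Hwu
  simp only [mul_zero, add_zero, zero_add] at Hv Hu Huv Hwv Hwu
  -- `H(z, z') = 0` is the conjugate of `H(z', z) = 0`.
  have Hvu : (z t).1 * starRingEnd ℂ (z' t).1 + (z t).2 * starRingEnd ℂ (z' t).2 = 0 := by
    have h := congrArg (starRingEnd ℂ) Huv
    simp only [map_add, map_mul, Complex.conj_conj, map_zero] at h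
    linear_combination h
  obtain ⟨h1, h2⟩ := eq_zero_of_orthogonal_to_unitary_basis
    (x := (z'' t).1 - Complex.I * l * (z' t).1 + (z t).1)
    (y := (z'' t).2 - Complex.I * l * (z' t).2 + (z t).2) Hv Hu Huv
    (by linear_combination Hwv - Complex.I * l * Huv + Hv)
    (by linear_combination Hwu - Complex.I * l * Hu + Hvu)
  ext1
  · simp only [Prod.fst_sub, Prod.smul_fst, smul_eq_mul]
    linear_combination h1
  · simp only [Prod.snd_sub, Prod.smul_snd, smul_eq_mul]
    linear_combination h2
end

section
/- Equip ℂ² with the real pseudo-inner product ⟨v, w⟩₁ = Re(−v₁·conj(w₁) + v₂·conj(w₂)). Let z : I → ℂ² be a twice differentiable curve on an open interval I with ⟨z(t), z(t)⟩₁ = −1, ⟨z'(t), z'(t)⟩₁ = 1 and ⟨z'(t), i·z(t)⟩₁ = 0 for all t ∈ I. Then z''(t) = i·λ(t)·z'(t) + z(t) for all t ∈ I, where λ(t) = ⟨z''(t), i·z'(t)⟩₁. -/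
/-!
Let `h(v, w) = -v₁ w̄₁ + v₂ w̄₂`, so that `⟨v, w⟩₁ = Re h(v, w)` and `⟨v, i w⟩₁ = Im h(v, w)`.
Differentiating `⟨z, z⟩₁ = -1` and using the Legendre condition gives `h(z', z) = 0`; hence
`z, z'` is a pseudo-orthonormal complex frame of `ℂ²`. Differentiating once more
(`pseudoInnerC2_deriv_of_const`) gives `h(z'', z) = -1` and `h(z'', z') = i λ`, which are also the
products of `i λ z' + z` with `z` and `z'`. Since `h` is nondegenerate
(`eq_zero_of_orthogonal_frame`), the two vectors agree.
-/

/-- The real pseudo-inner product ⟨v,w⟩₁ = Re(−v₁ w̄₁ + v₂ w̄₂) on ℂ²₁. -/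
noncomputable def pseudoInnerC2 (v w : ℂ × ℂ) : ℝ :=
  (-(v.1 * starRingEnd ℂ w.1) + v.2 * starRingEnd ℂ w.2).re

/-- Leibniz rule for a pair of curves whose pseudo-inner product is constant on an interval. -/
lemma pseudoInnerC2_deriv_of_const {a b c t : ℝ} (ht : t ∈ Set.Ioo a b)
    {f g : ℝ → ℂ × ℂ} {f' g' : ℂ × ℂ} (hf : HasDerivAt f f' t) (hg : HasDerivAt g g' t)
    (hc : ∀ s ∈ Set.Ioo a b, pseudoInnerC2 (f s) (g s) = c) :
    pseudoInnerC2 f' (g t) + pseudoInnerC2 (f t) g' = 0 := by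
  have hf1 : HasDerivAt (fun s => (f s).1) f'.1 t :=
    (ContinuousLinearMap.fst ℝ ℂ ℂ).hasFDerivAt.comp_hasDerivAt t hf
  have hf2 : HasDerivAt (fun s => (f s).2) f'.2 t :=
    (ContinuousLinearMap.snd ℝ ℂ ℂ).hasFDerivAt.comp_hasDerivAt t hf
  have hg1 : HasDerivAt (fun s => (g s).1) g'.1 t :=
    (ContinuousLinearMap.fst ℝ ℂ ℂ).hasFDerivAt.comp_hasDerivAt t hg
  have hg2 : HasDerivAt (fun s => (g s).2) g'.2 t :=
    (ContinuousLinearMap.snd ℝ ℂ ℂ).hasFDerivAt.comp_hasDerivAt t hg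
  have hd := Complex.reCLM.hasFDerivAt.comp_hasDerivAt t
    ((hf1.mul hg1.star).neg.add (hf2.mul hg2.star))
  have hconst : HasDerivAt (fun s => pseudoInnerC2 (f s) (g s)) 0 t := by
    refine (hasDerivAt_const t c).congr_of_eventuallyEq ?_
    filter_upwards [isOpen_Ioo.mem_nhds ht] with s hs using hc s hs
  have h := hd.unique hconst
  simp only [pseudoInnerC2, Complex.reCLM_apply, Complex.add_re, Complex.neg_re,
    Complex.star_def] at h ⊢
  linarith

/-- The Hermitian form `-v₁ w̄₁ + v₂ w̄₂` is nondegenerate: a vector orthogonal to both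
members of a pseudo-orthonormal frame `u, v` vanishes. -/
lemma eq_zero_of_orthogonal_frame {u v w : ℂ × ℂ}
    (huu : -(u.1 * starRingEnd ℂ u.1) + u.2 * starRingEnd ℂ u.2 = -1)
    (hvv : -(v.1 * starRingEnd ℂ v.1) + v.2 * starRingEnd ℂ v.2 = 1)
    (hvu : -(v.1 * starRingEnd ℂ u.1) + v.2 * starRingEnd ℂ u.2 = 0)
    (hwu : -(w.1 * starRingEnd ℂ u.1) + w.2 * starRingEnd ℂ u.2 = 0)
    (hwv : -(w.1 * starRingEnd ℂ v.1) + w.2 * starRingEnd ℂ v.2 = 0) : w = 0 := by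
  have huv : -(starRingEnd ℂ v.1 * u.1) + starRingEnd ℂ v.2 * u.2 = 0 := by
    simpa using congrArg (starRingEnd ℂ) hvu
  -- The Gram determinant of the frame is `-|D|²` with `D = u₁ v₂ - u₂ v₁`.
  have hD : (u.1 * v.2 - u.2 * v.1) *
      (starRingEnd ℂ u.1 * starRingEnd ℂ v.2 - starRingEnd ℂ u.2 * starRingEnd ℂ v.1) = 1 := by
    linear_combination
      (-(-(v.1 * starRingEnd ℂ v.1) + v.2 * starRingEnd ℂ v.2)) * huu + hvv +
        (-(starRingEnd ℂ v.1 * u.1) + starRingEnd ℂ v.2 * u.2) * hvu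
  have hD0 := right_ne_zero_of_mul_eq_one hD
  -- Cramer's rule.
  refine Prod.ext ((mul_eq_zero.1 ?_).resolve_right hD0) ((mul_eq_zero.1 ?_).resolve_right hD0)
  · linear_combination (-starRingEnd ℂ v.2) * hwu + starRingEnd ℂ u.2 * hwv
  · linear_combination (-starRingEnd ℂ v.1) * hwu + starRingEnd ℂ u.1 * hwv

/-- A unit speed Legendre curve z in H₁³(−1) ⊂ ℂ²₁ satisfies z'' = iλz' + z,
where λ = ⟨z'', iz'⟩₁ is its curvature. -/
theorem stmt_19 (a b : ℝ) (z z' z'' : ℝ → ℂ × ℂ)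
    (hz : ∀ t ∈ Set.Ioo a b, HasDerivAt z (z' t) t)
    (hz' : ∀ t ∈ Set.Ioo a b, HasDerivAt z' (z'' t) t)
    (hunit : ∀ t ∈ Set.Ioo a b, pseudoInnerC2 (z t) (z t) = -1)
    (hspeed : ∀ t ∈ Set.Ioo a b, pseudoInnerC2 (z' t) (z' t) = 1)
    (hLeg : ∀ t ∈ Set.Ioo a b, pseudoInnerC2 (z' t) (Complex.I • z t) = 0) :
    ∀ t ∈ Set.Ioo a b,
      z'' t = ((Complex.I * (pseudoInnerC2 (z'' t) (Complex.I • z' t) : ℂ)) • z' t)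
        + z t := by
  intro t ht
  have hIz : ∀ s ∈ Set.Ioo a b, HasDerivAt (fun s => Complex.I • z s) (Complex.I • z' s) s :=
    fun s hs => (hz s hs).const_smul Complex.I
  have e0 := hunit t ht
  have e1 := hspeed t ht
  have e2 := hLeg t ht
  have e3 : ∀ s ∈ Set.Ioo a b, pseudoInnerC2 (z' s) (z s) = 0 := by
    intro s hs
    have h := pseudoInnerC2_deriv_of_const hs (hz s hs) (hz s hs) hunit
    simp [pseudoInnerC2] at h ⊢
    linarith
  have e4 := pseudoInnerC2_deriv_of_const ht (hz' t ht) (hz t ht) e3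
  have e5 := pseudoInnerC2_deriv_of_const ht (hz' t ht) (hIz t ht) hLeg
  have e6 := pseudoInnerC2_deriv_of_const ht (hz' t ht) (hz' t ht) hspeed
  have e3 := e3 t ht
  obtain ⟨l, hl⟩ : ∃ l, l = pseudoInnerC2 (z'' t) (Complex.I • z' t) := ⟨_, rfl⟩
  rw [← hl]
  generalize z t = u at *
  generalize z' t = v at *
  generalize z'' t = w at *
  simp only [pseudoInnerC2, Prod.smul_fst, Prod.smul_snd, smul_eq_mul, map_mul, Complex.conj_I,
    Complex.add_re, Complex.neg_re, Complex.mul_re, Complex.mul_im, Complex.conj_re,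
    Complex.conj_im, Complex.neg_im, Complex.I_re, Complex.I_im] at e0 e1 e2 e3 e4 e5 e6 hl
  have huu : -(u.1 * starRingEnd ℂ u.1) + u.2 * starRingEnd ℂ u.2 = -1 := by
    apply Complex.ext <;> simp <;> linarith
  have hvv : -(v.1 * starRingEnd ℂ v.1) + v.2 * starRingEnd ℂ v.2 = 1 := by
    apply Complex.ext <;> simp <;> linarith
  have hvu : -(v.1 * starRingEnd ℂ u.1) + v.2 * starRingEnd ℂ u.2 = 0 := by
    apply Complex.ext <;> simp <;> linarith
  have hwu : -(w.1 * starRingEnd ℂ u.1) + w.2 * starRingEnd ℂ u.2 = -1 := by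
    apply Complex.ext <;> simp <;> linarith
  have hwv : -(w.1 * starRingEnd ℂ v.1) + w.2 * starRingEnd ℂ v.2 = Complex.I * l := by
    apply Complex.ext <;> simp <;> linarith
  refine sub_eq_zero.1 (eq_zero_of_orthogonal_frame huu hvv hvu ?_ ?_)
  · simp only [Prod.fst_sub, Prod.snd_sub, Prod.fst_add, Prod.snd_add, Prod.smul_fst,
      Prod.smul_snd, smul_eq_mul]
    linear_combination hwu - huu - Complex.I * l * hvu
  · have huv : -(starRingEnd ℂ v.1 * u.1) + starRingEnd ℂ v.2 * u.2 = 0 := by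
      simpa using congrArg (starRingEnd ℂ) hvu
    simp only [Prod.fst_sub, Prod.snd_sub, Prod.fst_add, Prod.snd_add, Prod.smul_fst,
      Prod.smul_snd, smul_eq_mul]
    linear_combination hwv - huv - Complex.I * l * hvv
end
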